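/- Let n ≥ 3 be an integer, ε_1, …, ε_n ∈ {−1, 1} and r_1, …, r_n > 0. The functional F(u) = ∫_{ℝⁿ} ( −( Σ_{j=1}^n ε_j ∂_j∂_j u )² − Σ_{j=1}^n (∂_j u)²/r_j² + 2 Σ_{1≤j<k≤n} ε_j ε_k (∂_j u)(∂_k u)/(r_j r_k) ) is indefinite on C_c^∞(ℝⁿ): there exist u, v ∈ C_c^∞(ℝⁿ) with F(u) > 0 and F(v) < 0. -/

import Mathlib

open MeasureTheory Real

/-- The partial derivative `∂_j u` of a function `u : ℝⁿ → ℝ`. -/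
noncomputable def pd {n : ℕ} (j : Fin n) (u : (Fin n → ℝ) → ℝ) (x : Fin n → ℝ) : ℝ :=
  fderiv ℝ u x (Pi.single j 1)

/-- Membership in `C_c^∞(ℝⁿ)`: smooth and compactly supported. -/
def IsCc {n : ℕ} (u : (Fin n → ℝ) → ℝ) : Prop :=
  ContDiff ℝ (⊤ : ℕ∞) u ∧ HasCompactSupport u

/-!
Write `F(u) = ∫ (-(L u)² + Q(∇u))` with `L` a homogeneous second order operator and `Q` a quadratic
form on `ℝⁿ`. If `Q ξ > 0`, then for `φ ∈ C_c^∞` the modulated functions `φ cos⟨λξ, x⟩` and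
`φ sin⟨λξ, x⟩` have Dirichlet integrals adding up to `∫ Q(∇φ) + λ² Q(ξ) ∫ φ²`, because the cross
terms cancel, so for large `λ` one of them is positive. Replacing `u` by `u(s ·)` multiplies the
`Q`-term by `s²` and the `L`-term by `s⁴`, up to the common Jacobian, so for small `s` the sign of
the `Q`-term wins and `F > 0`. A `u` with `∫ Q(∇u) < 0` has `F(u) < 0` outright. For the hyperbolas,
`Q p = (∑ aⱼ pⱼ)² - 2 ∑ aⱼ² pⱼ²` with `aⱼ = εⱼ / rⱼ`; it equals `n² - 2n > 0` at `pⱼ = 1 / aⱼ` and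
is negative on the coordinate axes.
-/

section QuadraticForm

theorem quadraticForm_rotation_add {R M : Type*} [CommRing R] [AddCommGroup M] [Module R M]
    (Q : QuadraticForm R M) (c s : R) (p q : M) :
    Q (c • p + -s • q) + Q (s • p + c • q) = (c ^ 2 + s ^ 2) * (Q p + Q q) := by
  simp only [QuadraticMap.map_add Q, QuadraticMap.map_smul, QuadraticMap.polar_smul_left,
    QuadraticMap.polar_smul_right, smul_eq_mul]
  ring

theorem continuous_quadraticForm {E : Type*} [NormedAddCommGroup E] [NormedSpace ℝ E]
    [FiniteDimensional ℝ E] (Q : QuadraticForm ℝ E) : Continuous Q := by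
  let B : E →L[ℝ] E →L[ℝ] ℝ := (QuadraticMap.associated Q).toContinuousBilinearMap
  have hQ : ⇑Q = fun x => B x x :=
    funext fun x => (QuadraticMap.associated_eq_self_apply ℝ Q x).symm
  rw [hQ]
  fun_prop

theorem two_mul_sum_sum_ite_lt {R ι : Type*} [CommRing R] [Fintype ι] [LinearOrder ι]
    (q : ι → R) :
    2 * ∑ j, ∑ k, (if j < k then q j * q k else 0) = (∑ j, q j) ^ 2 - ∑ j, q j ^ 2 := by
  have hpair : ∀ j k, q j * q k = (if j < k then q j * q k else 0)
      + (if k < j then q k * q j else 0) + (if j = k then q j ^ 2 else 0) := by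
    intro j k
    rcases lt_trichotomy j k with h | rfl | h
    · simp [h, h.not_gt, h.ne]
    · simp [sq]
    · simp [h, h.not_gt, h.ne', mul_comm]
  have hswap : ∑ j, ∑ k, (if k < j then q k * q j else 0)
      = ∑ j, ∑ k, (if j < k then q j * q k else 0) := Finset.sum_comm
  have hsquare : (∑ j, q j) ^ 2 = ∑ j, ∑ k, (if j < k then q j * q k else 0)
      + ∑ j, ∑ k, (if k < j then q k * q j else 0) + ∑ j, q j ^ 2 := by
    rw [sq, Finset.sum_mul_sum,
      Finset.sum_congr rfl fun j _ => Finset.sum_congr rfl fun k _ => hpair j k]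
    simp only [Finset.sum_add_distrib, Finset.sum_ite_eq, Finset.mem_univ, if_true]
  rw [hsquare, hswap]
  ring

variable {ι : Type*} [Fintype ι] {a : ι → ℝ}

/-- The quadratic form `(∑ aⱼ pⱼ)² - 2 ∑ aⱼ² pⱼ²`, which is the first order part of the second
variation of a product of hyperbolas when `aⱼ = εⱼ / rⱼ`. -/
noncomputable def hyperbolaForm (a : ι → ℝ) : QuadraticForm ℝ (ι → ℝ) :=
  QuadraticMap.sq.comp (Fintype.linearCombination ℝ a)
    - (2 : ℝ) • QuadraticMap.weightedSumSquares ℝ (fun j => a j ^ 2)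

theorem hyperbolaForm_apply (a p : ι → ℝ) :
    hyperbolaForm a p = (∑ j, a j * p j) ^ 2 - 2 * ∑ j, (a j * p j) ^ 2 := by
  simp only [hyperbolaForm, sub_apply, smul_apply, QuadraticMap.comp_apply,
    QuadraticMap.sq_apply, QuadraticMap.weightedSumSquares_apply, Fintype.linearCombination_apply,
    smul_eq_mul, mul_pow, ← sq, mul_comm]

theorem hyperbolaForm_inv_pos (ha : ∀ j, a j ≠ 0) (hι : 3 ≤ Fintype.card ι) :
    0 < hyperbolaForm a a⁻¹ := by
  have hι' : (3 : ℝ) ≤ Fintype.card ι := by exact_mod_cast hι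
  simp only [hyperbolaForm_apply, Pi.inv_apply, mul_inv_cancel₀ (ha _), one_pow, Finset.sum_const,
    Finset.card_univ, nsmul_eq_mul, mul_one]
  nlinarith

theorem hyperbolaForm_single_neg [DecidableEq ι] {j : ι} (ha : a j ≠ 0) :
    hyperbolaForm a (Pi.single j 1) < 0 := by
  have hval : hyperbolaForm a (Pi.single j 1) = -a j ^ 2 := by
    simp only [hyperbolaForm_apply, Pi.single_apply, mul_ite, mul_one, mul_zero, ite_pow,
      zero_pow two_ne_zero, Finset.sum_ite_eq', Finset.mem_univ, if_true]
    ring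
  rw [hval]
  exact neg_neg_of_pos (by positivity)

end QuadraticForm

section SecondVariation

variable {n : ℕ} {u : (Fin n → ℝ) → ℝ}

/-- The coordinate gradient `(∂_1 u, …, ∂_n u)`; Mathlib's `gradient` is not available because
`Fin n → ℝ` carries the sup norm. -/
noncomputable def grad (u : (Fin n → ℝ) → ℝ) (x : Fin n → ℝ) : Fin n → ℝ := fun j => pd j u x

/-- The diagonal second order operator `∑ cⱼ ∂_j∂_j u`; for `c = ε` it is the pseudo-Riemannian
Laplacian occurring in the second variation. -/
noncomputable def diagLaplacian (c : Fin n → ℝ) (u : (Fin n → ℝ) → ℝ) (x : Fin n → ℝ) : ℝ :=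
  ∑ j, c j * pd j (pd j u) x

/-- The energy `∫ Q(∇u)`, which is the classical Dirichlet energy when `Q` is the sum of squares. -/
noncomputable def dirichletEnergy (Q : QuadraticForm ℝ (Fin n → ℝ)) (u : (Fin n → ℝ) → ℝ) : ℝ :=
  ∫ x, Q (grad u x)

/-- The functional `∫ (-(∑ cⱼ ∂_j∂_j u)² + Q(∇u))`, an abstract form of the second variation of
volume under the Hamiltonian variation with potential `u`. -/
noncomputable def secondVariation (c : Fin n → ℝ) (Q : QuadraticForm ℝ (Fin n → ℝ))
    (u : (Fin n → ℝ) → ℝ) : ℝ :=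
  ∫ x, (-diagLaplacian c u x ^ 2 + Q (grad u x))

theorem pd_const_mul (hu : Differentiable ℝ u) (c : ℝ) (j : Fin n) (x : Fin n → ℝ) :
    pd j (fun x => c * u x) x = c * pd j u x := by
  simp only [pd, fderiv_const_mul (hu x), smul_apply, smul_eq_mul]

theorem pd_comp_smul (u : (Fin n → ℝ) → ℝ) (s : ℝ) (j : Fin n) (x : Fin n → ℝ) :
    pd j (fun x => u (s • x)) x = s * pd j u (s • x) := by
  simp only [pd, fderiv_comp_smul, smul_apply, smul_eq_mul]

theorem grad_comp_smul (u : (Fin n → ℝ) → ℝ) (s : ℝ) (x : Fin n → ℝ) :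
    grad (fun x => u (s • x)) x = s • grad u (s • x) :=
  funext fun j => pd_comp_smul u s j x

theorem grad_mul_comp_dotProduct {g g' : ℝ → ℝ} (hu : Differentiable ℝ u)
    (hg : ∀ t, HasDerivAt g (g' t) t) (ξ x : Fin n → ℝ) :
    grad (fun x => u x * g (ξ ⬝ᵥ x)) x
      = g (ξ ⬝ᵥ x) • grad u x + g' (ξ ⬝ᵥ x) • u x • ξ := by
  have hlin : HasFDerivAt (fun x => ξ ⬝ᵥ x)
      (LinearMap.toContinuousLinearMap (dotProductBilin ℝ ℝ ξ)) x :=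
    (LinearMap.toContinuousLinearMap (dotProductBilin ℝ ℝ ξ)).hasFDerivAt
  have hmul := (hu x).hasFDerivAt.fun_mul ((hg (ξ ⬝ᵥ x)).comp_hasFDerivAt x hlin)
  ext j
  simp only [Function.comp_apply] at hmul
  simp only [grad, pd, hmul.fderiv, add_apply, smul_apply, LinearMap.coe_toContinuousLinearMap',
    dotProductBilin_apply_apply, dotProduct_single, mul_one, smul_eq_mul, Pi.add_apply,
    Pi.smul_apply]
  ring

namespace IsCc

theorem differentiable (hu : IsCc u) : Differentiable ℝ u :=
  hu.1.differentiable (by simp)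

theorem integrable (hu : IsCc u) : Integrable u :=
  hu.1.continuous.integrable_of_hasCompactSupport hu.2

theorem const_mul (hu : IsCc u) (c : ℝ) : IsCc (fun x => c * u x) :=
  ⟨contDiff_const.mul hu.1, hu.2.mul_left⟩

theorem mul_contDiff {g : (Fin n → ℝ) → ℝ} (hu : IsCc u) (hg : ContDiff ℝ (⊤ : ℕ∞) g) :
    IsCc (fun x => u x * g x) :=
  ⟨hu.1.mul hg, hu.2.mul_right⟩

protected theorem sq (hu : IsCc u) : IsCc (fun x => u x ^ 2) := by
  simpa only [pow_two] using hu.mul_contDiff hu.1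

theorem mul_comp_dotProduct {g : ℝ → ℝ} (hu : IsCc u) (hg : ContDiff ℝ (⊤ : ℕ∞) g)
    (ξ : Fin n → ℝ) : IsCc (fun x => u x * g (ξ ⬝ᵥ x)) := by
  have hphase : ContDiff ℝ (⊤ : ℕ∞) fun x => ξ ⬝ᵥ x := by
    unfold dotProduct
    fun_prop
  exact hu.mul_contDiff (hg.comp hphase)

protected theorem sum {ι : Type*} {s : Finset ι} {f : ι → (Fin n → ℝ) → ℝ}
    (hf : ∀ i ∈ s, IsCc (f i)) : IsCc (fun x => ∑ i ∈ s, f i x) := by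
  refine ⟨ContDiff.sum fun i hi => (hf i hi).1, ?_⟩
  simpa only [Finset.sum_fn] using HasCompactSupport.finset_sum fun i hi => (hf i hi).2

theorem comp_smul (hu : IsCc u) {s : ℝ} (hs : s ≠ 0) : IsCc (fun x => u (s • x)) :=
  ⟨hu.1.comp (contDiff_const_smul s), hu.2.comp_smul hs⟩

protected theorem pd (hu : IsCc u) (j : Fin n) : IsCc (pd j u) :=
  ⟨(hu.1.fderiv_right (m := (⊤ : ℕ∞)) (by simp)).clm_apply contDiff_const,
    hu.2.fderiv_apply ℝ (Pi.single j 1)⟩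

protected theorem diagLaplacian (hu : IsCc u) (c : Fin n → ℝ) : IsCc (diagLaplacian c u) :=
  IsCc.sum fun j _ => ((hu.pd j).pd j).const_mul (c j)

theorem integrable_quadraticForm_grad (hu : IsCc u) (Q : QuadraticForm ℝ (Fin n → ℝ)) :
    Integrable (fun x => Q (grad u x)) := by
  have hcont : Continuous (grad u) := continuous_pi fun j => (hu.pd j).1.continuous
  have hsupp : HasCompactSupport (grad u) :=
    (hu.2.fderiv ℝ).comp_left
      (g := fun (ℓ : (Fin n → ℝ) →L[ℝ] ℝ) (j : Fin n) => ℓ (Pi.single j 1)) rfl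
  exact ((continuous_quadraticForm Q).comp hcont).integrable_of_hasCompactSupport
    (hsupp.comp_left Q.map_zero)

end IsCc

theorem diagLaplacian_comp_smul (hu : IsCc u) (c : Fin n → ℝ) (s : ℝ) (x : Fin n → ℝ) :
    diagLaplacian c (fun x => u (s • x)) x = s ^ 2 * diagLaplacian c u (s • x) := by
  have hpd : ∀ j, pd j (pd j fun x => u (s • x)) x = s ^ 2 * pd j (pd j u) (s • x) := by
    intro j
    have hd : Differentiable ℝ fun x => pd j u (s • x) :=
      (hu.pd j).differentiable.comp (differentiable_id.const_smul s)
    rw [funext (pd_comp_smul u s j), pd_const_mul hd, pd_comp_smul (pd j u)]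
    ring
  simp only [diagLaplacian, hpd, Finset.mul_sum, mul_left_comm]

theorem dirichletEnergy_comp_smul (Q : QuadraticForm ℝ (Fin n → ℝ)) (u : (Fin n → ℝ) → ℝ)
    (s : ℝ) :
    dirichletEnergy Q (fun x => u (s • x)) = |(s ^ n)⁻¹| * s ^ 2 * dirichletEnergy Q u := by
  simp only [dirichletEnergy, grad_comp_smul, QuadraticMap.map_smul, smul_eq_mul,
    integral_const_mul]
  rw [Measure.integral_comp_smul volume (fun x => Q (grad u x)), Module.finrank_fin_fun,
    smul_eq_mul]
  ring

theorem integral_diagLaplacian_sq_comp_smul (hu : IsCc u) (c : Fin n → ℝ) (s : ℝ) :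
    ∫ x, diagLaplacian c (fun x => u (s • x)) x ^ 2
      = |(s ^ n)⁻¹| * s ^ 4 * ∫ x, diagLaplacian c u x ^ 2 := by
  simp only [diagLaplacian_comp_smul hu, mul_pow, integral_const_mul]
  rw [Measure.integral_comp_smul volume (fun x => diagLaplacian c u x ^ 2),
    Module.finrank_fin_fun, smul_eq_mul]
  ring

theorem secondVariation_eq_sub (hu : IsCc u) (c : Fin n → ℝ) (Q : QuadraticForm ℝ (Fin n → ℝ)) :
    secondVariation c Q u = dirichletEnergy Q u - ∫ x, diagLaplacian c u x ^ 2 := by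
  simp only [secondVariation, dirichletEnergy, neg_add_eq_sub]
  exact integral_sub (hu.integrable_quadraticForm_grad Q) (hu.diagLaplacian c).sq.integrable

theorem secondVariation_comp_smul (hu : IsCc u) (c : Fin n → ℝ)
    (Q : QuadraticForm ℝ (Fin n → ℝ)) {s : ℝ} (hs : s ≠ 0) :
    secondVariation c Q (fun x => u (s • x)) = |(s ^ n)⁻¹| * s ^ 2 *
      (dirichletEnergy Q u - s ^ 2 * ∫ x, diagLaplacian c u x ^ 2) := by
  rw [secondVariation_eq_sub (hu.comp_smul hs), dirichletEnergy_comp_smul,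
    integral_diagLaplacian_sq_comp_smul hu]
  ring

theorem dirichletEnergy_neg (Q : QuadraticForm ℝ (Fin n → ℝ)) (u : (Fin n → ℝ) → ℝ) :
    dirichletEnergy (-Q) u = -dirichletEnergy Q u :=
  integral_neg fun x => Q (grad u x)

theorem dirichletEnergy_mul_cos_add_mul_sin (hu : IsCc u) (Q : QuadraticForm ℝ (Fin n → ℝ))
    (ξ : Fin n → ℝ) :
    dirichletEnergy Q (fun x => u x * cos (ξ ⬝ᵥ x))
        + dirichletEnergy Q (fun x => u x * sin (ξ ⬝ᵥ x))
      = dirichletEnergy Q u + Q ξ * ∫ x, u x ^ 2 := by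
  have hcos := hu.mul_comp_dotProduct contDiff_cos ξ
  have hsin := hu.mul_comp_dotProduct contDiff_sin ξ
  have hpointwise : ∀ x, Q (grad (fun x => u x * cos (ξ ⬝ᵥ x)) x)
      + Q (grad (fun x => u x * sin (ξ ⬝ᵥ x)) x) = Q (grad u x) + Q ξ * u x ^ 2 := by
    intro x
    rw [grad_mul_comp_dotProduct hu.differentiable hasDerivAt_cos,
      grad_mul_comp_dotProduct hu.differentiable hasDerivAt_sin, quadraticForm_rotation_add,
      cos_sq_add_sin_sq, one_mul, QuadraticMap.map_smul, smul_eq_mul, mul_comm (Q ξ), ← sq]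
  simp only [dirichletEnergy]
  rw [← integral_add (hcos.integrable_quadraticForm_grad Q) (hsin.integrable_quadraticForm_grad Q),
    ← integral_const_mul,
    ← integral_add (hu.integrable_quadraticForm_grad Q) (hu.sq.const_mul (Q ξ)).integrable]
  exact integral_congr_ae (.of_forall hpointwise)

theorem exists_isCc_integral_sq_pos (n : ℕ) :
    ∃ φ : (Fin n → ℝ) → ℝ, IsCc φ ∧ 0 < ∫ x, φ x ^ 2 := by
  let φ : ContDiffBump (0 : Fin n → ℝ) := default
  have hφ : IsCc φ := ⟨φ.contDiff, φ.hasCompactSupport⟩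
  have hφ_zero : φ 0 = 1 := φ.one_of_mem_closedBall (Metric.mem_closedBall_self φ.rIn_pos.le)
  exact ⟨φ, hφ, hφ.sq.1.continuous.integral_pos_of_hasCompactSupport_nonneg_nonzero (x := 0)
    hφ.sq.2 (fun x => sq_nonneg _) (by norm_num [hφ_zero])⟩

theorem exists_dirichletEnergy_pos {Q : QuadraticForm ℝ (Fin n → ℝ)} (hQ : ∃ ξ, 0 < Q ξ) :
    ∃ u, IsCc u ∧ 0 < dirichletEnergy Q u := by
  obtain ⟨ξ, hξ⟩ := hQ
  obtain ⟨φ, hφ, hφ_pos⟩ := exists_isCc_integral_sq_pos n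
  obtain ⟨N, hN⟩ := exists_nat_gt (-dirichletEnergy Q φ / (Q ξ * ∫ x, φ x ^ 2))
  rw [div_lt_iff₀ (mul_pos hξ hφ_pos)] at hN
  have hsum := dirichletEnergy_mul_cos_add_mul_sin hφ Q (√N • ξ)
  rw [QuadraticMap.map_smul, mul_self_sqrt N.cast_nonneg, smul_eq_mul, mul_assoc] at hsum
  rcases lt_or_ge 0 (dirichletEnergy Q fun x => φ x * cos ((√N • ξ) ⬝ᵥ x)) with hcos | hcos
  · exact ⟨_, hφ.mul_comp_dotProduct contDiff_cos _, hcos⟩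
  · exact ⟨_, hφ.mul_comp_dotProduct contDiff_sin _, by linarith⟩

theorem exists_secondVariation_pos (c : Fin n → ℝ) {Q : QuadraticForm ℝ (Fin n → ℝ)}
    (hQ : ∃ ξ, 0 < Q ξ) : ∃ u, IsCc u ∧ 0 < secondVariation c Q u := by
  obtain ⟨u, hu, henergy⟩ := exists_dirichletEnergy_pos hQ
  obtain ⟨t, ht, hlt⟩ := exists_pos_mul_lt henergy (∫ x, diagLaplacian c u x ^ 2)
  have hs : 0 < √t := sqrt_pos.2 ht
  refine ⟨_, hu.comp_smul hs.ne', ?_⟩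
  rw [secondVariation_comp_smul hu c Q hs.ne', sq_sqrt ht.le, mul_comm t (∫ _, _)]
  exact mul_pos (by positivity) (sub_pos.2 hlt)

theorem exists_secondVariation_neg (c : Fin n → ℝ) {Q : QuadraticForm ℝ (Fin n → ℝ)}
    (hQ : ∃ ξ, Q ξ < 0) : ∃ u, IsCc u ∧ secondVariation c Q u < 0 := by
  obtain ⟨u, hu, henergy⟩ := exists_dirichletEnergy_pos (Q := -Q) (hQ.imp fun _ => neg_pos.2)
  rw [dirichletEnergy_neg, neg_pos] at henergy
  have hsq : 0 ≤ ∫ x, diagLaplacian c u x ^ 2 := integral_nonneg fun x => sq_nonneg _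
  refine ⟨u, hu, ?_⟩
  rw [secondVariation_eq_sub hu]
  linarith

theorem product_of_hyperbolas_H_unstable_general (c : Fin n → ℝ)
    {Q : QuadraticForm ℝ (Fin n → ℝ)} (hpos : ∃ ξ, 0 < Q ξ) (hneg : ∃ ξ, Q ξ < 0) :
    ∃ u v : (Fin n → ℝ) → ℝ, IsCc u ∧ IsCc v ∧
      0 < secondVariation c Q u ∧ secondVariation c Q v < 0 := by
  obtain ⟨u, hu, hFu⟩ := exists_secondVariation_pos c hpos
  obtain ⟨v, hv, hFv⟩ := exists_secondVariation_neg c hneg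
  exact ⟨u, v, hu, hv, hFu, hFv⟩

theorem secondVariation_hyperbolaForm {ε : Fin n → ℝ} (hε : ∀ j, ε j = -1 ∨ ε j = 1)
    (r : Fin n → ℝ) (u : (Fin n → ℝ) → ℝ) :
    secondVariation ε (hyperbolaForm (ε / r)) u =
      ∫ x, (-(∑ j, ε j * pd j (pd j u) x) ^ 2 - ∑ j, (pd j u x) ^ 2 / (r j) ^ 2
        + 2 * ∑ j, ∑ k,
          (if j < k then ε j * ε k * pd j u x * pd k u x / (r j * r k) else 0)) := by
  refine integral_congr_ae (.of_forall fun x => ?_)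
  have hε_sq : ∀ j, ε j ^ 2 = 1 := fun j => by
    rcases hε j with h | h <;> norm_num [h]
  have hsq : ∀ j, (pd j u x) ^ 2 / (r j) ^ 2 = (ε j / r j * pd j u x) ^ 2 := by
    intro j
    rw [mul_pow, div_pow, hε_sq]
    ring
  have hcross : ∀ j k, ε j * ε k * pd j u x * pd k u x / (r j * r k)
      = (ε j / r j * pd j u x) * (ε k / r k * pd k u x) := by
    intro j k
    ring
  simp only [hyperbolaForm_apply, diagLaplacian, grad, Pi.div_apply, hsq, hcross,
    two_mul_sum_sum_ite_lt]
  ring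

end SecondVariation

/-- For `n ≥ 3`, the Hamiltonian second variation functional of the product of
hyperbolas `H^n_{r_1,…,r_n} ⊂ Dⁿ`,
`F(u) = ∫ (−(Σ ε_j ∂_j∂_j u)² − Σ (∂_j u)²/r_j² + 2 Σ_{j<k} ε_j ε_k ∂_j u ∂_k u/(r_j r_k))`,
is indefinite on `C_c^∞(ℝⁿ)`. -/
theorem product_of_hyperbolas_H_unstable
    (n : ℕ) (hn : 3 ≤ n) (ε r : Fin n → ℝ)
    (hε : ∀ j, ε j = -1 ∨ ε j = 1) (hr : ∀ j, 0 < r j) :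
    ∃ u v : (Fin n → ℝ) → ℝ, IsCc u ∧ IsCc v ∧
      0 < (∫ x, (-(∑ j, ε j * pd j (pd j u) x) ^ 2 - ∑ j, (pd j u x) ^ 2 / (r j) ^ 2
          + 2 * ∑ j, ∑ k, (if j < k then ε j * ε k * pd j u x * pd k u x / (r j * r k) else 0))) ∧
      (∫ x, (-(∑ j, ε j * pd j (pd j v) x) ^ 2 - ∑ j, (pd j v x) ^ 2 / (r j) ^ 2
          + 2 * ∑ j, ∑ k, (if j < k then ε j * ε k * pd j v x * pd k v x / (r j * r k) else 0))) < 0 := by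
  have ha : ∀ j, (ε / r) j ≠ 0 := fun j =>
    div_ne_zero (by rcases hε j with h | h <;> norm_num [h]) (hr j).ne'
  simp only [← secondVariation_hyperbolaForm hε]
  exact product_of_hyperbolas_H_unstable_general ε
    ⟨_, hyperbolaForm_inv_pos ha (by simpa only [Fintype.card_fin] using hn)⟩
    ⟨_, hyperbolaForm_single_neg (j := ⟨0, by omega⟩) (ha _)⟩
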